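/- Let C be a quasiminimal pregeometry class and H ∈ C uncountable. Then H is σ-saturated: for every subset X ⊆ H with |X| < |H| and every σ-type p over X in finitely many variables, p is realised in H. -/

import Mathlib

open FirstOrder FirstOrder.Language Set Cardinal



universe u u' v w

namespace QM

variable {L : FirstOrder.Language.{v, w}}

/-- Formulas of `L_{ω₁,ω}`: built from atomic formulas by negation, countable
conjunction (indexed by `ℕ`), and universal quantification; `α` is the type of free
variables and `n` counts the de Bruijn bound variables. Countable disjunctions and
the existential quantifier are definable via negation. -/
inductive InfFormula (L : FirstOrder.Language.{v, w}) (α : Type u) : ℕ → Type (max u v w)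
  | falsum {n : ℕ} : InfFormula L α n
  | equal {n : ℕ} (t₁ t₂ : L.Term (α ⊕ (Fin n))) : InfFormula L α n
  | rel {n l : ℕ} (R : L.Relations l) (ts : Fin l → L.Term (α ⊕ (Fin n))) : InfFormula L α n
  | not {n : ℕ} (φ : InfFormula L α n) : InfFormula L α n
  | iInf {n : ℕ} (φ : ℕ → InfFormula L α n) : InfFormula L α n
  | all {n : ℕ} (φ : InfFormula L α (n + 1)) : InfFormula L α n

/-- Satisfaction of an `L_{ω₁,ω}`-formula in an `L`-structure `M`, given an
assignment `v` of the free variables and `xs` of the bound variables. -/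
def InfFormula.Realize {M : Type u'} [L.Structure M] {α : Type u} :
    ∀ {n : ℕ}, InfFormula L α n → (α → M) → (Fin n → M) → Prop
  | _, .falsum, _, _ => False
  | _, .equal t₁ t₂, v, xs => t₁.realize (Sum.elim v xs) = t₂.realize (Sum.elim v xs)
  | _, .rel R ts, v, xs => Structure.RelMap R (fun i => (ts i).realize (Sum.elim v xs))
  | _, .not φ, v, xs => ¬ φ.Realize v xs
  | _, .iInf φ, v, xs => ∀ i : ℕ, (φ i).Realize v xs
  | _, .all φ, v, xs => ∀ x : M, φ.Realize v (Fin.snoc xs x)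

/-- An `L_{ω₁,ω}`-sentence. -/
abbrev InfSentence (L : FirstOrder.Language.{v, w}) := InfFormula L PEmpty 0

/-- Satisfaction of an `L_{ω₁,ω}`-sentence. -/
def InfSentence.RealizeS (M : Type u') [L.Structure M] (φ : InfSentence L) : Prop :=
  InfFormula.Realize (M := M) φ PEmpty.elim (fun i => i.elim0)

/-- Satisfaction of an `L_{ω₁,ω}`-formula with parameters from the set `A`
and `m` free variables `v̄`, at the tuple `v`. -/
def InfFormula.RealizeP {M : Type u'} [L.Structure M] {A : Set M} {m : ℕ}
    (φ : InfFormula L (↥A ⊕ Fin m) 0) (v : Fin m → M) : Prop :=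
  φ.Realize (Sum.elim Subtype.val v) (fun i => i.elim0)

/-- The domain of a partial map, viewed as a graph (set of pairs). -/
def pdom {H : Type*} {H' : Type*} (p : Set (H × H')) : Set H := Prod.fst '' p

/-- The image of a partial map, viewed as a graph (set of pairs). -/
def pimg {H : Type*} {H' : Type*} (p : Set (H × H')) : Set H' := Prod.snd '' p

/-- The image of a set `X` under a partial map given as a graph. -/
def pimage {H : Type*} {H' : Type*} (p : Set (H × H')) (X : Set H) : Set H' :=
  {b | ∃ a ∈ X, (a, b) ∈ p}

/-- A partial map (given as its graph `p`) is a partial embedding if it preserves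
quantifier-free first-order formulas. (This forces `p` to be the graph of an
injective partial function.) -/
def IsPartialEmbedding {H : Type u} {H' : Type u} [L.Structure H] [L.Structure H']
    (p : Set (H × H')) : Prop :=
  ∀ (n : ℕ) (φ : L.Formula (Fin n)), BoundedFormula.IsQF φ →
    ∀ (a : Fin n → H) (b : Fin n → H'), (∀ i, (a i, b i) ∈ p) →
      (φ.Realize a ↔ φ.Realize b)

/-- A partial map is a σ-embedding if it is a partial embedding and preserves all
`L_{ω₁,ω}`-formulas with (possibly infinitely many) parameters from its domain;
equivalently `⟨M, m⟩_{m ∈ dom p} ≡_{ω₁,ω} ⟨N, p(m)⟩_{m ∈ dom p}`. -/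
def IsSigmaEmbedding {H : Type u} {H' : Type u} [L.Structure H] [L.Structure H']
    (p : Set (H × H')) : Prop :=
  IsPartialEmbedding (L := L) p ∧
    ∀ (φ : InfFormula L (↥(pdom p)) 0) (b : ↥(pdom p) → H'),
      (∀ x : ↥(pdom p), ((x : H), b x) ∈ p) →
        (φ.Realize Subtype.val (fun i => i.elim0) ↔ φ.Realize b (fun i => i.elim0))

/-- A pregeometry (combinatorial geometry) on a set. -/
structure IsPregeometry {α : Type*} (cl : Set α → Set α) : Prop where
  subset_cl : ∀ X, X ⊆ cl X
  mono : ∀ ⦃X Y : Set α⦄, X ⊆ Y → cl X ⊆ cl Y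
  idem : ∀ X, cl (cl X) = cl X
  finChar : ∀ (X : Set α) (y : α), y ∈ cl X → ∃ F : Finset α, ↑F ⊆ X ∧ y ∈ cl ↑F
  exchange : ∀ (X : Set α) (a b : α), a ∈ cl (X ∪ {b}) → a ∉ cl X → b ∈ cl (X ∪ {a})

/-- A pair `⟨H, cl_H⟩` of an `L`-structure and a closure operator on it. -/
structure QMObj (L : FirstOrder.Language.{v, w}) where
  carrier : Type u
  [str : L.Structure carrier]
  cl : Set carrier → Set carrier

attribute [instance] QMObj.str

/-- `G` is countable and closed, or empty. -/
def CCOE (H : QMObj.{u} L) (G : Set H.carrier) : Prop :=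
  (G.Countable ∧ H.cl G = G) ∨ G = ∅

/-- The axioms for a class of pairs `⟨H, cl_H⟩` to be a quasiminimal pregeometry class. -/
structure IsQMClass (C : Set (QMObj.{u} L)) : Prop where
  /-- Closure under isomorphisms, transporting the closure operator. -/
  iso_closed : ∀ H ∈ C, ∀ (N : Type u) [_iN : L.Structure N] (f : H.carrier ≃[L] N),
      (⟨N, fun X => f '' (H.cl (f ⁻¹' X))⟩ : QMObj L) ∈ C
  /-- Any two members satisfy the same quantifier-free sentences. -/
  qf_theory : ∀ H ∈ C, ∀ H' ∈ C, ∀ (φ : L.Sentence), BoundedFormula.IsQF φ →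
      (H.carrier ⊨ φ ↔ H'.carrier ⊨ φ)
  /-- Each `cl_H` is a pregeometry. -/
  pregeom : ∀ H ∈ C, IsPregeometry H.cl
  /-- The closure of a finite set is countable. -/
  cl_finite_countable : ∀ H ∈ C, ∀ X : Set H.carrier, X.Finite → (H.cl X).Countable
  /-- The closure of any set is (the underlying set of) a substructure which, with the
  restricted closure operator, is again a member of the class. -/
  cl_mem : ∀ H ∈ C, ∀ X : Set H.carrier, ∃ S : L.Substructure H.carrier,
      (S : Set H.carrier) = H.cl X ∧
      (⟨↥S, fun Y => Subtype.val ⁻¹' (H.cl (Subtype.val '' Y))⟩ : QMObj L) ∈ C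
  /-- Partial embeddings preserve and reflect the closure relation. -/
  cl_embedding : ∀ H ∈ C, ∀ H' ∈ C, ∀ (p : Set (H.carrier × H'.carrier)),
      IsPartialEmbedding (L := L) p → ∀ X ⊆ pdom p, ∀ (y : H.carrier) (y' : H'.carrier),
        (y, y') ∈ p → (y ∈ H.cl X ↔ y' ∈ H'.cl (pimage p X))
  /-- ℵ₀-homogeneity over countable closed models, part (i): an isomorphism between
  countable closed (or empty) sets extends by any pair of independent points. -/
  homogeneity₁ : ∀ H ∈ C, ∀ H' ∈ C, ∀ (g : Set (H.carrier × H'.carrier)),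
      CCOE H (pdom g) → CCOE H' (pimg g) → IsPartialEmbedding (L := L) g →
      ∀ (x : H.carrier) (x' : H'.carrier), x ∉ H.cl (pdom g) → x' ∉ H'.cl (pimg g) →
        IsPartialEmbedding (L := L) (g ∪ {(x, x')})
  /-- ℵ₀-homogeneity over countable closed models, part (ii). -/
  homogeneity₂ : ∀ H ∈ C, ∀ H' ∈ C, ∀ (g f : Set (H.carrier × H'.carrier)),
      CCOE H (pdom g) → CCOE H' (pimg g) → IsPartialEmbedding (L := L) g →
      (pdom f).Finite → IsPartialEmbedding (L := L) (g ∪ f) →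
      ∀ y ∈ H.cl (pdom f ∪ pdom g), ∃ y' : H'.carrier,
        IsPartialEmbedding (L := L) (g ∪ f ∪ {(y, y')})


/-- `p` is a σ-type over `A` in `m` variables: every countable subset of `p` is
consistent with the structure, i.e. simultaneously satisfiable. -/
def IsSigmaType {M : Type u'} [L.Structure M] {A : Set M} {m : ℕ}
    (p : Set (InfFormula L (↥A ⊕ Fin m) 0)) : Prop :=
  ∀ Φ ⊆ p, Φ.Countable → ∃ v : Fin m → M, ∀ φ ∈ Φ, φ.RealizeP v

/-- A σ-type `p` is isolated if there is a consistent `L_{ω₁,ω}`-formula `ψ(x̄)`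
(possibly with parameters from `M`) such that `ψ` implies every formula of `p`. -/
def IsIsolated {M : Type u'} [L.Structure M] {A : Set M} {m : ℕ}
    (p : Set (InfFormula L (↥A ⊕ Fin m) 0)) : Prop :=
  ∃ ψ : InfFormula L (M ⊕ Fin m) 0,
    (∃ v : Fin m → M, ψ.Realize (Sum.elim id v) (fun i => i.elim0)) ∧
    ∀ φ ∈ p, ∀ v : Fin m → M, ψ.Realize (Sum.elim id v) (fun i => i.elim0) → φ.RealizeP v

/-- A σ-type `p` is realised if some tuple satisfies every formula of `p`. -/
def IsRealized {M : Type u'} [L.Structure M] {A : Set M} {m : ℕ}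
    (p : Set (InfFormula L (↥A ⊕ Fin m) 0)) : Prop :=
  ∃ v : Fin m → M, ∀ φ ∈ p, φ.RealizeP v

/-- `B` is an independent subset of the pregeometry `⟨H, cl_H⟩`. -/
def IsIndep (H : QMObj.{u} L) (B : Set H.carrier) : Prop :=
  ∀ x ∈ B, x ∉ H.cl (B \ {x})

/-- `B` is a basis of the pregeometry `⟨H, cl_H⟩`: a maximal independent subset. -/
def IsBasis (H : QMObj.{u} L) (B : Set H.carrier) : Prop :=
  IsIndep H B ∧ ∀ B' : Set H.carrier, B ⊆ B' → IsIndep H B' → B' = B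

/-- The model-theoretic algebraic closure of `X` in `M`: the set of elements
satisfying some first-order formula with parameters in `X` having finitely many
solutions. -/
def aclS (L : FirstOrder.Language.{v, w}) (M : Type u) [L.Structure M] (X : Set M) :
    Set M :=
  {y | ∃ (n : ℕ) (φ : L.BoundedFormula (Fin n) 1) (v : Fin n → M),
    (∀ i, v i ∈ X) ∧ φ.Realize v ![y] ∧ {z : M | φ.Realize v ![z]}.Finite}

/-! The partial embeddings that add finitely many pairs to an isomorphism of countable closed sets
form a back-and-forth system as long as the closure operators have infinite dimension over these
sets, so by Karp's theorem they preserve all `L_{ω₁,ω}`-formulas with parameters in their domain.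
If `H` has infinite dimension over `X`, then for each `m` there is one finite `B ⊆ H`, namely `m`
points independent over `X`, such that over every countable `Y ⊆ X` each `m`-tuple has the same
`L_{ω₁,ω}`-type as some tuple from `cl (B ∪ Y)`.

Suppose that no tuple realises the σ-type `p`, and choose for every `m`-tuple `v` a formula
`φ v ∈ p` that fails at `v`. A closing-off argument gives a countable `Y ⊆ X` that contains the
parameters of `φ v` for all `v` in the countable set `cl (B ∪ Y)`. These countably many formulas
hold together at some `w`, hence at a tuple `w'` of `cl (B ∪ Y)` with the same type over `Y`. In
particular `φ w'` holds at `w'`, a contradiction. -/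

section PartialMaps

variable {α : Type*} {β : Type*}

theorem mem_pdom {p : Set (α × β)} {a : α} : a ∈ pdom p ↔ ∃ b, (a, b) ∈ p := by
  simp [pdom]

theorem mem_pimg {p : Set (α × β)} {b : β} : b ∈ pimg p ↔ ∃ a, (a, b) ∈ p := by
  simp [pimg]

theorem mem_pdom_of_mem {p : Set (α × β)} {a : α} {b : β} (h : (a, b) ∈ p) : a ∈ pdom p :=
  mem_pdom.2 ⟨b, h⟩

theorem mem_pimg_of_mem {p : Set (α × β)} {a : α} {b : β} (h : (a, b) ∈ p) : b ∈ pimg p :=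
  mem_pimg.2 ⟨a, h⟩

theorem pdom_insert (a : α) (b : β) (p : Set (α × β)) :
    pdom (insert (a, b) p) = insert a (pdom p) :=
  image_insert_eq

theorem pimg_insert (a : α) (b : β) (p : Set (α × β)) :
    pimg (insert (a, b) p) = insert b (pimg p) :=
  image_insert_eq

theorem pdom_swap (p : Set (α × β)) : pdom (Prod.swap ⁻¹' p) = pimg p := by
  ext; simp [mem_pdom, mem_pimg]

theorem pimg_swap (p : Set (α × β)) : pimg (Prod.swap ⁻¹' p) = pdom p := by
  ext; simp [mem_pdom, mem_pimg]

theorem swap_insert (a : α) (b : β) (p : Set (α × β)) :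
    Prod.swap ⁻¹' insert (a, b) p = insert (b, a) (Prod.swap ⁻¹' p) := by
  ext ⟨x, y⟩; simp [and_comm]

/-- The graph of the identity map of a set `G`, as a partial map from the ambient type to
itself. -/
def idOn (G : Set α) : Set (α × α) := (fun x => (x, x)) '' G

theorem pdom_idOn (G : Set α) : pdom (idOn G) = G := by
  simp [pdom, idOn, image_image]

theorem pimg_idOn (G : Set α) : pimg (idOn G) = G := by
  simp [pimg, idOn, image_image]

/-- A set `S` of partial maps is a back-and-forth system between `K` and `K'` if every map in `S`
can be extended within `S` by one more argument from `K`, and by one more value from `K'`. -/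
structure IsBackAndForth (S : Set (Set (α × β))) (K : Set α) (K' : Set β) : Prop where
  forth : ∀ q ∈ S, ∀ x ∈ K, ∃ y, insert (x, y) q ∈ S
  back : ∀ q ∈ S, ∀ y ∈ K', ∃ x, insert (x, y) q ∈ S

theorem IsBackAndForth.exists_directedOn {S : Set (Set (α × β))} {K : Set α} {K' : Set β}
    (hS : IsBackAndForth S K K') (hK : K.Countable) (hK' : K'.Countable) {q : Set (α × β)}
    (hq : q ∈ S) :
    ∃ D ⊆ S, q ∈ D ∧ DirectedOn (· ⊆ ·) D ∧ K ⊆ pdom (⋃₀ D) ∧ K' ⊆ pimg (⋃₀ D) := by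
  have := hK.to_subtype
  have := hK'.to_subtype
  have : Encodable (K ⊕ K') := Encodable.ofCountable _
  let requirement : K ⊕ K' → Order.Cofinal S
    | .inl x =>
      { carrier := {r | x.1 ∈ pdom r.1}
        isCofinal := fun r =>
          let ⟨_, hr'⟩ := hS.forth r.1 r.2 x.1 x.2
          ⟨⟨_, hr'⟩, mem_pdom_of_mem (mem_insert _ _), subset_insert _ _⟩ }
    | .inr y =>
      { carrier := {r | y.1 ∈ pimg r.1}
        isCofinal := fun r =>
          let ⟨_, hr'⟩ := hS.back r.1 r.2 y.1 y.2
          ⟨⟨_, hr'⟩, mem_pimg_of_mem (mem_insert _ _), subset_insert _ _⟩ }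
  let I := Order.idealOfCofinals ⟨q, hq⟩ requirement
  refine ⟨Subtype.val '' (I : Set S), by rintro _ ⟨r, -, rfl⟩; exact r.2,
    mem_image_of_mem _ (Order.mem_idealOfCofinals _ requirement),
    directedOn_image.2 I.directed, fun x hx => ?_, fun y hy => ?_⟩
  · obtain ⟨r, hxr, hrI⟩ :=
      Order.cofinal_meets_idealOfCofinals ⟨q, hq⟩ requirement (.inl ⟨x, hx⟩)
    exact image_mono (subset_sUnion_of_mem (mem_image_of_mem _ hrI)) hxr
  · obtain ⟨r, hyr, hrI⟩ :=
      Order.cofinal_meets_idealOfCofinals ⟨q, hq⟩ requirement (.inr ⟨y, hy⟩)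
    exact image_mono (subset_sUnion_of_mem (mem_image_of_mem _ hrI)) hyr

end PartialMaps

theorem isQF_restrictFreeVar {α : Type*} {β : Type*} [DecidableEq α] {n : ℕ}
    {φ : L.BoundedFormula α n} (hφ : φ.IsQF) (f : φ.freeVarFinset → β) :
    (φ.restrictFreeVar f).IsQF := by
  induction hφ with
  | falsum => exact .falsum
  | of_isAtomic h =>
    cases h with
    | equal t₁ t₂ => exact (BoundedFormula.IsAtomic.equal _ _).isQF
    | rel R ts => exact (BoundedFormula.IsAtomic.rel _ _).isQF
  | imp _ _ ih₁ ih₂ => exact (ih₁ _).imp (ih₂ _)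

namespace IsPartialEmbedding

variable {M N : Type u} [L.Structure M] [L.Structure N] {p q : Set (M × N)}

protected theorem mono (hq : IsPartialEmbedding (L := L) q) (hpq : p ⊆ q) :
    IsPartialEmbedding (L := L) p :=
  fun n φ hφ a b hab => hq n φ hφ a b fun i => hpq (hab i)

protected theorem swap (hp : IsPartialEmbedding (L := L) p) :
    IsPartialEmbedding (L := L) (Prod.swap ⁻¹' p) :=
  fun n φ hφ a b hab => (hp n φ hφ b a hab).symm

protected theorem idOn (G : Set M) : IsPartialEmbedding (L := L) (idOn G) := by
  intro n φ _ a b hab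
  have : a = b := funext fun i => by
    obtain ⟨x, -, hx⟩ := hab i
    exact (congrArg Prod.fst hx).symm.trans (congrArg Prod.snd hx)
  rw [this]

protected theorem sUnion {D : Set (Set (M × N))} (hne : D.Nonempty) (hdir : DirectedOn (· ⊆ ·) D)
    (hD : ∀ q ∈ D, IsPartialEmbedding (L := L) q) : IsPartialEmbedding (L := L) (⋃₀ D) := by
  intro n φ hφ a b hab
  obtain ⟨q, hqD, hq⟩ := hdir.exists_mem_subset_of_finite_of_subset_sUnion hne
    (finite_range fun i => (a i, b i)) (range_subset_iff.2 hab)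
  exact hD q hqD n φ hφ a b (range_subset_iff.1 hq)

theorem realize_iff (hp : IsPartialEmbedding (L := L) p) {β : Type*} [DecidableEq β]
    {φ : L.Formula β} (hφ : φ.IsQF) {a : β → M} {b : β → N}
    (hab : ∀ x ∈ φ.freeVarFinset, (a x, b x) ∈ p) : φ.Realize a ↔ φ.Realize b := by
  let e := φ.freeVarFinset.equivFin
  have key := hp _ (φ.restrictFreeVar e) (isQF_restrictFreeVar hφ e)
    (fun j => a (e.symm j)) (fun j => b (e.symm j)) fun j => hab _ (e.symm j).2
  rwa [Formula.Realize, BoundedFormula.realize_restrictFreeVar a (by simp), Formula.Realize,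
    BoundedFormula.realize_restrictFreeVar b (by simp)] at key

theorem eq_of_mem (hp : IsPartialEmbedding (L := L) p) {a : M} {b b' : N} (hb : (a, b) ∈ p)
    (hb' : (a, b') ∈ p) : b = b' := by
  have := hp 2 ((Term.var 0).equal (Term.var 1)) (BoundedFormula.IsAtomic.equal _ _).isQF
    ![a, a] ![b, b'] (by simp [Fin.forall_fin_two, hb, hb'])
  simpa using this

theorem pimage_subset (hq : IsPartialEmbedding (L := L) q) (hpq : p ⊆ q) :
    pimage q (pdom p) ⊆ pimg p := by
  rintro b ⟨a, ha, hab⟩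
  obtain ⟨b', hab'⟩ := mem_pdom.1 ha
  exact hq.eq_of_mem hab (hpq hab') ▸ mem_pimg_of_mem hab'

end IsPartialEmbedding

namespace InfFormula

open Classical in
/-- The set of free variables in `α` occurring in an `L_{ω₁,ω}`-formula. The finitely many
bound variables of an atomic subformula, which sit in the right summand, are discarded. -/
noncomputable def freeVars {α : Type u} : ∀ {n : ℕ}, InfFormula L α n → Set α
  | _, .falsum => ∅
  | _, .equal t₁ t₂ => {a | Sum.inl a ∈ (t₁.equal t₂).freeVarFinset}
  | _, .rel R ts => {a | Sum.inl a ∈ (R.formula ts).freeVarFinset}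
  | _, .not φ => φ.freeVars
  | _, .iInf φ => ⋃ i, (φ i).freeVars
  | _, .all φ => φ.freeVars

theorem countable_freeVars {α : Type u} {n : ℕ} (φ : InfFormula L α n) :
    φ.freeVars.Countable := by
  induction φ with
  | falsum => exact countable_empty
  | equal t₁ t₂ => exact (Finset.countable_toSet _).preimage Sum.inl_injective
  | rel R ts => exact (Finset.countable_toSet _).preimage Sum.inl_injective
  | not _ ih => exact ih
  | iInf _ ih => exact countable_iUnion ih
  | all _ ih => exact ih

end InfFormula

theorem IsBackAndForth.realize_iff {M N : Type u} [L.Structure M] [L.Structure N]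
    {S : Set (Set (M × N))} (hS : IsBackAndForth S univ univ)
    (hemb : ∀ q ∈ S, IsPartialEmbedding (L := L) q) {α : Type u} {n : ℕ} (φ : InfFormula L α n)
    {q : Set (M × N)} (hq : q ∈ S) {v : α → M} {v' : α → N} {xs : Fin n → M} {xs' : Fin n → N}
    (hv : ∀ a ∈ φ.freeVars, (v a, v' a) ∈ q) (hxs : ∀ i, (xs i, xs' i) ∈ q) :
    φ.Realize v xs ↔ φ.Realize v' xs' := by
  classical
  induction φ generalizing q with
  | falsum => exact Iff.rfl
  | equal t₁ t₂ =>
    have := (hemb q hq).realize_iff (φ := t₁.equal t₂) (BoundedFormula.IsAtomic.equal _ _).isQF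
      (a := Sum.elim v xs) (b := Sum.elim v' xs')
      (by rintro (a | i) h; exacts [hv a h, hxs i])
    simpa only [Formula.realize_equal, InfFormula.Realize] using this
  | rel R ts =>
    have := (hemb q hq).realize_iff (φ := R.formula ts) (BoundedFormula.IsAtomic.rel _ _).isQF
      (a := Sum.elim v xs) (b := Sum.elim v' xs')
      (by rintro (a | i) h; exacts [hv a h, hxs i])
    simpa only [Formula.realize_rel, InfFormula.Realize] using this
  | not _ ih => exact not_congr (ih hq hv hxs)
  | iInf _ ih => exact forall_congr' fun i => ih i hq (fun a ha => hv a (mem_iUnion.2 ⟨i, ha⟩)) hxs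
  | all φ ih =>
    have step {x x'} (h : insert (x, x') q ∈ S) :
        φ.Realize v (Fin.snoc xs x) ↔ φ.Realize v' (Fin.snoc xs' x') :=
      ih h (fun a ha => mem_insert_of_mem _ (hv a ha)) (by simp [Fin.forall_fin_succ', hxs])
    refine ⟨fun h x' => ?_, fun h x => ?_⟩
    · obtain ⟨x, hx⟩ := hS.back q hq x' (mem_univ _)
      exact (step hx).1 (h x)
    · obtain ⟨x', hx'⟩ := hS.forth q hq x (mem_univ _)
      exact (step hx').2 (h x')

theorem exists_countable_forall_finset_subset {α : Type*} {D : Finset α → Set α}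
    (hD : ∀ F, (D F).Countable) :
    ∃ Y : Set α, Y.Countable ∧ ∀ F : Finset α, ↑F ⊆ Y → D F ⊆ Y := by
  let next (S : Set α) : Set α := S ∪ ⋃ F ∈ {F : Finset α | ↑F ⊆ S}, D F
  let S (n : ℕ) : Set α := next^[n] ∅
  have hsucc (n : ℕ) : S (n + 1) = next (S n) := Function.iterate_succ_apply' ..
  have hmono : Monotone S :=
    monotone_nat_of_le_succ fun n => (hsucc n).symm ▸ subset_union_left
  have hcount (n : ℕ) : (S n).Countable := by
    induction n with
    | zero => exact countable_empty
    | succ n ih =>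
      have hfin : {F : Finset α | ↑F ⊆ S n}.Countable := by
        simpa using (countable_ofPred_finite_subset ih).preimage Finset.coe_injective
      exact hsucc n ▸ ih.union (hfin.biUnion fun F _ => hD F)
  refine ⟨⋃ n, S n, countable_iUnion hcount, fun F hF => ?_⟩
  obtain ⟨n, hn⟩ := hmono.directed_le.exists_mem_subset_of_finset_subset_biUnion hF
  calc D F ⊆ next (S n) := subset_union_of_subset_right (subset_biUnion_of_mem (u := D) hn) _
    _ = S (n + 1) := (hsucc n).symm
    _ ⊆ ⋃ n, S n := subset_iUnion S (n + 1)

/-- The closure operator `cl` has infinite dimension over `X`: no finite set spans the whole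
type together with `X`. -/
def IsInfDimOver {α : Type*} (cl : Set α → Set α) (X : Set α) : Prop :=
  ∀ B : Set α, B.Finite → cl (B ∪ X) ≠ Set.univ

theorem IsInfDimOver.exists_notMem {α : Type*} {cl : Set α → Set α} {X B : Set α}
    (hX : IsInfDimOver cl X) (hB : B.Finite) : ∃ x, x ∉ cl (B ∪ X) :=
  (ne_univ_iff_exists_notMem _).1 (hX B hB)

namespace IsPregeometry

variable {α : Type u} {cl : Set α → Set α} {X Y : Set α}

theorem cl_subset (hcl : IsPregeometry cl) (h : Y ⊆ cl X) : cl Y ⊆ cl X :=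
  (hcl.mono h).trans_eq (hcl.idem X)

theorem cl_insert_eq (hcl : IsPregeometry cl) {x : α} (hx : x ∈ cl X) :
    cl (insert x X) = cl X :=
  (hcl.cl_subset (insert_subset hx (hcl.subset_cl X))).antisymm (hcl.mono (subset_insert x X))

theorem cl_union_subset (hcl : IsPregeometry cl) (B : Set α) (h : Y ⊆ cl X) :
    cl (B ∪ Y) ⊆ cl (B ∪ X) :=
  hcl.cl_subset (union_subset (subset_union_left.trans (hcl.subset_cl _))
    (h.trans (hcl.mono subset_union_right)))

theorem isInfDimOver_of_subset_cl (hcl : IsPregeometry cl) (hX : IsInfDimOver cl X)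
    (h : Y ⊆ cl X) : IsInfDimOver cl Y :=
  fun B hB hY => hX B hB (univ_subset_iff.1 (hY ▸ hcl.cl_union_subset B h))

theorem mk_cl_le (hcl : IsPregeometry cl) (hfin : ∀ F : Set α, F.Finite → (cl F).Countable)
    (X : Set α) : #(cl X) ≤ max ℵ₀ #X := by
  classical
  have hcover : cl X ⊆ ⋃ l : List X, cl (Subtype.val '' {x | x ∈ l}) := by
    intro y hy
    obtain ⟨F, hFX, hyF⟩ := hcl.finChar X y hy
    refine mem_iUnion.2 ⟨(F.subtype (· ∈ X)).toList, hcl.mono (fun x hx => ?_) hyF⟩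
    exact ⟨⟨x, hFX hx⟩, by simpa using hx, rfl⟩
  calc #(cl X) ≤ #(⋃ l : List X, cl (Subtype.val '' {x | x ∈ l})) := mk_le_mk_of_subset hcover
    _ ≤ #(List X) * ⨆ l : List X, #(cl (Subtype.val '' {x | x ∈ l})) := mk_iUnion_le _
    _ ≤ max ℵ₀ #X * ℵ₀ := mul_le_mul' (mk_list_le_max X) <| ciSup_le' fun l =>
        (hfin _ (l.finite_toSet.image _)).le_aleph0
    _ = max ℵ₀ #X := mul_aleph0_eq (le_max_left _ _)

theorem countable_cl (hcl : IsPregeometry cl)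
    (hfin : ∀ F : Set α, F.Finite → (cl F).Countable) (hX : X.Countable) : (cl X).Countable :=
  le_aleph0_iff_set_countable.1 ((hcl.mk_cl_le hfin X).trans (max_le le_rfl hX.le_aleph0))

theorem isInfDimOver_of_mk_lt [Uncountable α] (hcl : IsPregeometry cl)
    (hfin : ∀ F : Set α, F.Finite → (cl F).Countable) (hX : #X < #α) : IsInfDimOver cl X := by
  intro B hB huniv
  have hα : ℵ₀ < #α := aleph0_lt_mk
  have hBX : #↑(B ∪ X) < #α :=
    (mk_union_le B X).trans_lt (add_lt_of_lt hα.le (hB.lt_aleph0.trans hα) hX)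
  have hle := hcl.mk_cl_le hfin (B ∪ X)
  rw [huniv, mk_univ] at hle
  exact hle.not_gt (max_lt hα hBX)

theorem exists_finset_forall_mem_cl (hcl : IsPregeometry cl) {B : Set α} {Y : Set X} {m : ℕ}
    {v : Fin m → α} (hv : ∀ i, v i ∈ cl (B ∪ Subtype.val '' Y)) :
    ∃ F : Finset X, ↑F ⊆ Y ∧ ∀ i, v i ∈ cl (B ∪ Subtype.val '' (F : Set X)) := by
  classical
  choose T hTsub hT using fun i => hcl.finChar _ _ (hv i)
  have hfin : (⋃ i, Subtype.val ⁻¹' (T i : Set α) ∩ Y).Finite := finite_iUnion fun i =>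
    ((T i).finite_toSet.preimage Subtype.val_injective.injOn).inter_of_left Y
  refine ⟨hfin.toFinset, by simp, fun i => hcl.mono (fun x hx => ?_) (hT i)⟩
  rcases hTsub i hx with hxB | ⟨y, hyY, rfl⟩
  · exact Or.inl hxB
  · exact Or.inr ⟨y, by simpa using ⟨⟨i, hx⟩, hyY⟩, rfl⟩

theorem exists_countable_forall_subset (hcl : IsPregeometry cl)
    (hfin : ∀ F : Set α, F.Finite → (cl F).Countable) {B : Set α} (hB : B.Countable) {m : ℕ}
    {par : (Fin m → α) → Set X} (hpar : ∀ v, (par v).Countable) :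
    ∃ Y : Set X, Y.Countable ∧ ∀ v, (∀ i, v i ∈ cl (B ∪ Subtype.val '' Y)) → par v ⊆ Y := by
  let tuples (F : Finset X) : Set (Fin m → α) :=
    univ.pi fun _ => cl (B ∪ Subtype.val '' (F : Set X))
  have htuples (F : Finset X) : (tuples F).Countable := countable_univ_pi fun _ =>
    hcl.countable_cl hfin (hB.union (F.countable_toSet.image _))
  obtain ⟨Y, hY, hclosed⟩ := exists_countable_forall_finset_subset
    fun F => (htuples F).biUnion fun v _ => hpar v
  refine ⟨Y, hY, fun v hv => ?_⟩
  obtain ⟨F, hFY, hvF⟩ := hcl.exists_finset_forall_mem_cl hv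
  exact (subset_biUnion_of_mem (u := par) (mem_univ_pi.2 hvF)).trans (hclosed F hFY)

end IsPregeometry

section Extensions

variable {H H' : QMObj.{u} L} {g q : Set (H.carrier × H'.carrier)}

/-- `g` is an isomorphism between countable sets that are closed or empty: the maps over which
the homogeneity axioms of a quasiminimal pregeometry class apply. -/
structure IsClosedIso (g : Set (H.carrier × H'.carrier)) : Prop where
  isPartialEmbedding : IsPartialEmbedding (L := L) g
  ccoe_pdom : CCOE H (pdom g)
  ccoe_pimg : CCOE H' (pimg g)

/-- `q` is a partial embedding that adds finitely many pairs to `g`. -/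
structure IsFiniteExtension (g q : Set (H.carrier × H'.carrier)) : Prop where
  isPartialEmbedding : IsPartialEmbedding (L := L) q
  subset : g ⊆ q
  finite_sdiff : (q \ g).Finite

theorem CCOE.countable {G : Set H.carrier} (hG : CCOE H G) : G.Countable := by
  rcases hG with hG | rfl
  exacts [hG.1, countable_empty]

protected theorem IsClosedIso.swap (hg : IsClosedIso g) : IsClosedIso (Prod.swap ⁻¹' g) where
  isPartialEmbedding := hg.isPartialEmbedding.swap
  ccoe_pdom := by simpa only [pdom_swap] using hg.ccoe_pimg
  ccoe_pimg := by simpa only [pimg_swap] using hg.ccoe_pdom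

protected theorem IsClosedIso.idOn {G : Set H.carrier} (hG : CCOE H G) : IsClosedIso (idOn G) where
  isPartialEmbedding := .idOn G
  ccoe_pdom := by rwa [pdom_idOn]
  ccoe_pimg := by rwa [pimg_idOn]

namespace IsFiniteExtension

protected theorem refl (hg : IsPartialEmbedding (L := L) g) : IsFiniteExtension g g where
  isPartialEmbedding := hg
  subset := Subset.rfl
  finite_sdiff := by simp

protected theorem swap (hq : IsFiniteExtension g q) :
    IsFiniteExtension (Prod.swap ⁻¹' g) (Prod.swap ⁻¹' q) where
  isPartialEmbedding := hq.isPartialEmbedding.swap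
  subset := preimage_mono hq.subset
  finite_sdiff := by
    rw [← preimage_sdiff]
    exact hq.finite_sdiff.preimage Prod.swap_injective.injOn

protected theorem insert {x : H.carrier} {y : H'.carrier} (hq : IsFiniteExtension g q)
    (h : IsPartialEmbedding (L := L) (insert (x, y) q)) :
    IsFiniteExtension g (insert (x, y) q) where
  isPartialEmbedding := h
  subset := hq.subset.trans (subset_insert _ _)
  finite_sdiff := (hq.finite_sdiff.insert (x, y)).subset (by grind)

theorem pdom_eq (hq : IsFiniteExtension g q) : pdom q = pdom (q \ g) ∪ pdom g := by
  rw [pdom, pdom, pdom, ← image_union, sdiff_union_of_subset hq.subset]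

theorem pimg_eq (hq : IsFiniteExtension g q) : pimg q = pimg (q \ g) ∪ pimg g := by
  rw [pimg, pimg, pimg, ← image_union, sdiff_union_of_subset hq.subset]

theorem countable_pdom (hg : IsClosedIso g) (hq : IsFiniteExtension g q) :
    (pdom q).Countable :=
  hq.pdom_eq ▸ (hq.finite_sdiff.image Prod.fst).countable.union hg.ccoe_pdom.countable

theorem countable_pimg (hg : IsClosedIso g) (hq : IsFiniteExtension g q) :
    (pimg q).Countable :=
  hq.pimg_eq ▸ (hq.finite_sdiff.image Prod.snd).countable.union hg.ccoe_pimg.countable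

end IsFiniteExtension

end Extensions

namespace IsQMClass

variable {C : Set (QMObj.{u} L)} {H H' : QMObj.{u} L} {g q : Set (H.carrier × H'.carrier)}

theorem countable_cl (hC : IsQMClass C) (hH : H ∈ C) {Z : Set H.carrier} (hZ : Z.Countable) :
    (H.cl Z).Countable :=
  (hC.pregeom H hH).countable_cl (hC.cl_finite_countable H hH) hZ

theorem exists_insert_of_mem_cl_pdom (hC : IsQMClass C) (hH : H ∈ C) (hH' : H' ∈ C)
    (hg : IsClosedIso g) (hq : IsFiniteExtension g q) {x : H.carrier}
    (hx : x ∈ H.cl (pdom q)) :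
    ∃ y ∈ H'.cl (pimg q), IsFiniteExtension g (insert (x, y) q) := by
  obtain ⟨y, hy⟩ := hC.homogeneity₂ H hH H' hH' g (q \ g) hg.ccoe_pdom hg.ccoe_pimg
    hg.isPartialEmbedding (hq.finite_sdiff.image _)
    (by rw [union_sdiff_cancel hq.subset]; exact hq.isPartialEmbedding) x
    (by rwa [← hq.pdom_eq])
  rw [union_sdiff_cancel hq.subset, union_singleton] at hy
  have hy_cl : y ∈ H'.cl (pimage (insert (x, y) q) (pdom q)) :=
    (hC.cl_embedding H hH H' hH' _ hy (pdom q) (image_mono (subset_insert _ _)) x y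
      (mem_insert _ _)).1 hx
  exact ⟨y, (hC.pregeom H' hH').mono (hy.pimage_subset (subset_insert _ _)) hy_cl, hq.insert hy⟩

theorem exists_insert_of_mem_cl_pimg (hC : IsQMClass C) (hH : H ∈ C) (hH' : H' ∈ C)
    (hg : IsClosedIso g) (hq : IsFiniteExtension g q) {y : H'.carrier}
    (hy : y ∈ H'.cl (pimg q)) :
    ∃ x ∈ H.cl (pdom q), IsFiniteExtension g (insert (x, y) q) := by
  obtain ⟨x, hx, h⟩ := hC.exists_insert_of_mem_cl_pdom hH' hH hg.swap hq.swap (x := y)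
    (by rwa [pdom_swap])
  rw [← swap_insert] at h
  exact ⟨x, by rwa [pimg_swap] at hx, h.swap⟩

theorem isBackAndForth_cl (hC : IsQMClass C) (hH : H ∈ C) (hH' : H' ∈ C) (hg : IsClosedIso g) :
    IsBackAndForth
      {r | IsFiniteExtension g r ∧ H.cl (pdom r) = H.cl (pdom q) ∧
        H'.cl (pimg r) = H'.cl (pimg q)}
      (H.cl (pdom q)) (H'.cl (pimg q)) := by
  have hP := hC.pregeom H hH
  have hP' := hC.pregeom H' hH'
  constructor
  · rintro r ⟨hr, hdom, himg⟩ x hx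
    rw [← hdom] at hx
    obtain ⟨y, hy, h⟩ := hC.exists_insert_of_mem_cl_pdom hH hH' hg hr hx
    exact ⟨y, h, by rw [pdom_insert, hP.cl_insert_eq hx, hdom],
      by rw [pimg_insert, hP'.cl_insert_eq hy, himg]⟩
  · rintro r ⟨hr, hdom, himg⟩ y hy
    rw [← himg] at hy
    obtain ⟨x, hx, h⟩ := hC.exists_insert_of_mem_cl_pimg hH hH' hg hr hy
    exact ⟨x, h, by rw [pdom_insert, hP.cl_insert_eq hx, hdom],
      by rw [pimg_insert, hP'.cl_insert_eq hy, himg]⟩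

theorem exists_isClosedIso_cl (hC : IsQMClass C) (hH : H ∈ C) (hH' : H' ∈ C)
    (hg : IsClosedIso g) (hq : IsFiniteExtension g q) :
    ∃ h : Set (H.carrier × H'.carrier), q ⊆ h ∧ IsClosedIso h ∧
      pdom h = H.cl (pdom q) ∧ pimg h = H'.cl (pimg q) := by
  have hP := hC.pregeom H hH
  have hP' := hC.pregeom H' hH'
  have hdom_count := hC.countable_cl hH (hq.countable_pdom hg)
  have himg_count := hC.countable_cl hH' (hq.countable_pimg hg)
  obtain ⟨D, hD, hqD, hdir, hdom, himg⟩ := (hC.isBackAndForth_cl hH hH' hg).exists_directedOn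
    hdom_count himg_count ⟨hq, rfl, rfl⟩
  have hdom_eq : pdom (⋃₀ D) = H.cl (pdom q) := by
    refine Subset.antisymm ?_ hdom
    rintro _ ⟨z, ⟨r, hrD, hzr⟩, rfl⟩
    exact (hD hrD).2.1 ▸ hP.subset_cl _ (mem_image_of_mem _ hzr)
  have himg_eq : pimg (⋃₀ D) = H'.cl (pimg q) := by
    refine Subset.antisymm ?_ himg
    rintro _ ⟨z, ⟨r, hrD, hzr⟩, rfl⟩
    exact (hD hrD).2.2 ▸ hP'.subset_cl _ (mem_image_of_mem _ hzr)
  refine ⟨⋃₀ D, subset_sUnion_of_mem hqD, ⟨?_, ?_, ?_⟩, hdom_eq, himg_eq⟩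
  · exact .sUnion ⟨q, hqD⟩ hdir fun r hr => (hD hr).1.isPartialEmbedding
  · exact hdom_eq ▸ Or.inl ⟨hdom_count, hP.idem _⟩
  · exact himg_eq ▸ Or.inl ⟨himg_count, hP'.idem _⟩

theorem isFiniteExtension_insert_of_notMem_cl (hC : IsQMClass C) (hH : H ∈ C) (hH' : H' ∈ C)
    (hg : IsClosedIso g) (hq : IsFiniteExtension g q) {x : H.carrier} {y : H'.carrier}
    (hx : x ∉ H.cl (pdom q)) (hy : y ∉ H'.cl (pimg q)) :
    IsFiniteExtension g (insert (x, y) q) := by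
  obtain ⟨h, hqh, hh, hdom, himg⟩ := hC.exists_isClosedIso_cl hH hH' hg hq
  have hext := hC.homogeneity₁ H hH H' hH' h hh.ccoe_pdom hh.ccoe_pimg hh.isPartialEmbedding x y
    (by rwa [hdom, (hC.pregeom H hH).idem]) (by rwa [himg, (hC.pregeom H' hH').idem])
  rw [union_singleton] at hext
  exact hq.insert (hext.mono (insert_subset_insert hqh))

theorem exists_insert (hC : IsQMClass C) (hH : H ∈ C) (hH' : H' ∈ C) (hg : IsClosedIso g)
    (hdim : IsInfDimOver H'.cl (pimg g)) (hq : IsFiniteExtension g q) (x : H.carrier) :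
    ∃ y, IsFiniteExtension g (insert (x, y) q) := by
  by_cases hx : x ∈ H.cl (pdom q)
  · obtain ⟨y, -, h⟩ := hC.exists_insert_of_mem_cl_pdom hH hH' hg hq hx
    exact ⟨y, h⟩
  · obtain ⟨y, hy⟩ := hdim.exists_notMem (hq.finite_sdiff.image Prod.snd)
    exact ⟨y, hC.isFiniteExtension_insert_of_notMem_cl hH hH' hg hq hx (hq.pimg_eq ▸ hy)⟩

theorem isBackAndForth_univ (hC : IsQMClass C) (hH : H ∈ C) (hH' : H' ∈ C) (hg : IsClosedIso g)
    (hdim : IsInfDimOver H.cl (pdom g)) (hdim' : IsInfDimOver H'.cl (pimg g)) :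
    IsBackAndForth {q | IsFiniteExtension g q} univ univ where
  forth _ hq x _ := hC.exists_insert hH hH' hg hdim' hq x
  back q hq y _ := by
    obtain ⟨x, h⟩ :=
      hC.exists_insert hH' hH hg.swap (by rwa [pimg_swap]) (IsFiniteExtension.swap hq) y
    rw [← swap_insert] at h
    exact ⟨x, h.swap⟩

theorem exists_insert_pimg_subset (hC : IsQMClass C) (hH : H ∈ C) (hH' : H' ∈ C)
    (hg : IsClosedIso g) (hq : IsFiniteExtension g q) {B : Set H'.carrier}
    (hqB : pimg q ⊆ H'.cl (B ∪ pimg g)) {b : H'.carrier} (hb : b ∉ H'.cl (B ∪ pimg g))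
    (x : H.carrier) :
    ∃ y, IsFiniteExtension g (insert (x, y) q) ∧
      pimg (insert (x, y) q) ⊆ H'.cl (insert b B ∪ pimg g) := by
  have hP' := hC.pregeom H' hH'
  have hmono : H'.cl (B ∪ pimg g) ⊆ H'.cl (insert b B ∪ pimg g) :=
    hP'.mono (union_subset_union_left _ (subset_insert b B))
  have hcl := hP'.cl_subset hqB
  by_cases hx : x ∈ H.cl (pdom q)
  · obtain ⟨y, hy, h⟩ := hC.exists_insert_of_mem_cl_pdom hH hH' hg hq hx
    refine ⟨y, h, ?_⟩
    rw [pimg_insert]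
    exact (insert_subset (hcl hy) hqB).trans hmono
  · refine ⟨b, hC.isFiniteExtension_insert_of_notMem_cl hH hH' hg hq hx fun hbq => hb (hcl hbq), ?_⟩
    rw [pimg_insert]
    exact insert_subset (hP'.subset_cl _ (Or.inl (mem_insert b B))) (hqB.trans hmono)

-- Points independent over `X` are independent over every subset of `cl X`, so the same `m` of them
-- serve all `g`.
theorem exists_finite_forall_exists_isFiniteExtension (hC : IsQMClass C) (hH' : H' ∈ C)
    {X : Set H'.carrier} (hX : IsInfDimOver H'.cl X) (m : ℕ) :
    ∃ B : Set H'.carrier, B.Finite ∧ ∀ H ∈ C, ∀ g : Set (H.carrier × H'.carrier),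
      IsClosedIso g → pimg g ⊆ H'.cl X → ∀ w : Fin m → H.carrier,
        ∃ q, IsFiniteExtension g q ∧ pimg q ⊆ H'.cl (B ∪ pimg g) ∧ ∀ i, w i ∈ pdom q := by
  have hP' := hC.pregeom H' hH'
  induction m with
  | zero =>
    exact ⟨∅, finite_empty, fun _ _ g hg _ _ => ⟨g, .refl hg.isPartialEmbedding,
      subset_union_right.trans (hP'.subset_cl _), fun i => i.elim0⟩⟩
  | succ m ih =>
    obtain ⟨B, hB, ih⟩ := ih
    obtain ⟨b, hb⟩ := hX.exists_notMem hB
    refine ⟨insert b B, hB.insert b, fun H hH g hg hgX w => ?_⟩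
    obtain ⟨q, hq, hqB, hw⟩ := ih H hH g hg hgX (Fin.init w)
    obtain ⟨y, h, hB'⟩ := hC.exists_insert_pimg_subset hH hH' hg hq hqB
      (fun hb' => hb (hP'.cl_union_subset B hgX hb')) (w (Fin.last m))
    refine ⟨_, h, hB', ?_⟩
    rw [pdom_insert, Fin.forall_fin_succ']
    exact ⟨fun i => mem_insert_of_mem _ (hw i), mem_insert _ _⟩

theorem exists_finite_forall_exists_realizeP_iff (hC : IsQMClass C) (hH : H ∈ C)
    {X : Set H.carrier} (hX : IsInfDimOver H.cl X) (m : ℕ) :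
    ∃ B : Set H.carrier, B.Finite ∧ ∀ Y : Set X, Y.Countable → ∀ w : Fin m → H.carrier,
      ∃ w' : Fin m → H.carrier, (∀ i, w' i ∈ H.cl (B ∪ Subtype.val '' Y)) ∧
        ∀ φ : InfFormula L (X ⊕ Fin m) 0, Sum.inl ⁻¹' φ.freeVars ⊆ Y →
          (φ.RealizeP w ↔ φ.RealizeP w') := by
  have hP := hC.pregeom H hH
  obtain ⟨B, hB, hext⟩ := hC.exists_finite_forall_exists_isFiniteExtension hH hX m
  refine ⟨B, hB, fun Y hY w => ?_⟩
  set G := H.cl (Subtype.val '' Y)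
  have hGX : G ⊆ H.cl X := hP.mono (Subtype.coe_image_subset X Y)
  have hG : IsClosedIso (idOn G) :=
    .idOn (Or.inl ⟨hC.countable_cl hH (hY.image _), hP.idem _⟩)
  obtain ⟨q, hq, hqB, hw⟩ := hext H hH (idOn G) hG (by rwa [pimg_idOn]) w
  choose w' hw' using fun i => mem_pdom.1 (hw i)
  rw [pimg_idOn] at hqB
  refine ⟨w', fun i => hP.cl_union_subset B Subset.rfl (hqB (mem_pimg_of_mem (hw' i))),
    fun φ hφ => ?_⟩
  have hdim : IsInfDimOver H.cl G := hP.isInfDimOver_of_subset_cl hX hGX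
  have hS := hC.isBackAndForth_univ hH hH hG (by rwa [pdom_idOn]) (by rwa [pimg_idOn])
  refine hS.realize_iff (fun r hr => hr.isPartialEmbedding) φ hq ?_ fun i => i.elim0
  rintro (x | i) hx
  · exact hq.subset ⟨x, hP.subset_cl _ (mem_image_of_mem _ (hφ hx)), rfl⟩
  · exact hw' i

end IsQMClass

theorem statement_7_general {C : Set (QMObj.{u} L)} (hC : IsQMClass C) {H : QMObj.{u} L}
    (hH : H ∈ C) {X : Set H.carrier} (hX : IsInfDimOver H.cl X) {m : ℕ}
    {p : Set (InfFormula L (X ⊕ Fin m) 0)} (hp : IsSigmaType (L := L) p) :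
    IsRealized (L := L) p := by
  by_contra hnot
  have homit (v : Fin m → H.carrier) : ∃ φ ∈ p, ¬ φ.RealizeP v := by
    by_contra! h
    exact hnot ⟨v, h⟩
  choose φ hφp hφ using homit
  have hfin := hC.cl_finite_countable H hH
  obtain ⟨B, hB, htransfer⟩ := hC.exists_finite_forall_exists_realizeP_iff hH hX m
  obtain ⟨Y, hY, hpar⟩ := (hC.pregeom H hH).exists_countable_forall_subset hfin hB.countable
    fun v => (φ v).countable_freeVars.preimage Sum.inl_injective
  let V : Set (Fin m → H.carrier) := univ.pi fun _ => H.cl (B ∪ Subtype.val '' Y)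
  have hV : V.Countable := countable_univ_pi fun _ =>
    hC.countable_cl hH (hB.countable.union (hY.image _))
  obtain ⟨w, hw⟩ := hp (φ '' V) (image_subset_iff.2 fun v _ => hφp v) (hV.image φ)
  obtain ⟨w', hw', hiff⟩ := htransfer Y hY w
  have hw'V : w' ∈ V := mem_univ_pi.2 hw'
  exact hφ w' ((hiff (φ w') (hpar w' hw')).1 (hw _ (mem_image_of_mem φ hw'V)))

/-- Every uncountable `H ∈ C` is σ-saturated: every σ-type over a set of
cardinality less than `|H|` is realised in `H`. -/
theorem statement_7 {L : FirstOrder.Language.{v, w}} (C : Set (QMObj.{u} L))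
    (hC : IsQMClass C) (H : QMObj.{u} L) (hH : H ∈ C)
    (hunc : Uncountable H.carrier)
    (X : Set H.carrier) (hX : Cardinal.mk ↥X < Cardinal.mk H.carrier)
    (m : ℕ) (p : Set (InfFormula L (↥X ⊕ Fin m) 0)) (hp : IsSigmaType (L := L) p) :
    IsRealized (L := L) p :=
  statement_7_general hC hH
    ((hC.pregeom H hH).isInfDimOver_of_mk_lt (hC.cl_finite_countable H hH) hX) hp

end QM
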